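/- Let X be a Banach function space over a finite measure space and m : Σ → X a σ-additive vector measure. Assume: (a) X has the weak Banach-Saks property; (b) m is separable and positive, i.e. m(A) ∈ X⁺ for every A ∈ Σ; (c) L¹(m), regarded as a B.f.s. over a Rybakov control measure, has the subsequence splitting property. Then L¹(m) has the weak Banach-Saks property. -/

import Mathlib

open MeasureTheory Filter Topology
open scoped ENNReal

noncomputable section

namespace Paper

variable {Ω : Type*} [MeasurableSpace Ω]
variable {X : Type*} [NormedAddCommGroup X] [NormedSpace ℝ X]

/-- The signed measure `x* ∘ m` for a functional `x*` and vector measure `m`. -/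
def dualApply (m : VectorMeasure Ω X) (x : X →L[ℝ] ℝ) : SignedMeasure Ω :=
  m.mapRange x.toLinearMap.toAddMonoidHom x.continuous

/-- The semivariation `‖m‖(A)` of a vector measure. -/
def semivar (m : VectorMeasure Ω X) (A : Set Ω) : ℝ≥0∞ :=
  ⨆ x : {x : X →L[ℝ] ℝ // ‖x‖ ≤ 1}, (dualApply m x.1).totalVariation A

/-- `P` holds `‖m‖`-almost everywhere. -/
def MAE (m : VectorMeasure Ω X) (P : Ω → Prop) : Prop :=
  ∃ N : Set Ω, MeasurableSet N ∧ semivar m N = 0 ∧ ∀ ω ∉ N, P ω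

/-- The integral `∫_A f ds` of a real function with respect to a signed measure. -/
def sIntegral (s : SignedMeasure Ω) (f : Ω → ℝ) (A : Set Ω) : ℝ :=
  (∫ ω in A, f ω ∂s.toJordanDecomposition.posPart) -
    ∫ ω in A, f ω ∂s.toJordanDecomposition.negPart

/-- `f` is integrable with respect to the vector measure `m` (Bartle-Dunford-Schwartz). -/
def MIntegrable (m : VectorMeasure Ω X) (f : Ω → ℝ) : Prop :=
  Measurable f ∧
  (∀ x : X →L[ℝ] ℝ, Integrable f ((dualApply m x).totalVariation)) ∧
  (∀ A : Set Ω, MeasurableSet A →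
    ∃ v : X, ∀ x : X →L[ℝ] ℝ, x v = sIntegral (dualApply m x) f A)

open Classical in
/-- The vector integral `∫_A f dm ∈ X`. -/
def mIntegral (m : VectorMeasure Ω X) (f : Ω → ℝ) (A : Set Ω) : X :=
  if h : ∃ v : X, ∀ x : X →L[ℝ] ℝ, x v = sIntegral (dualApply m x) f A then h.choose
  else 0

/-- The norm of `L¹(m)`: `‖f‖ = sup_{‖x*‖ ≤ 1} ∫ |f| d|x*m|`. -/
def mNorm (m : VectorMeasure Ω X) (f : Ω → ℝ) : ℝ :=
  ⨆ x : {x : X →L[ℝ] ℝ // ‖x‖ ≤ 1}, ∫ ω, |f ω| ∂(dualApply m x.1).totalVariation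

/-- The vector measure `m` is separable: the pseudometric space `(Σ, d_m)`,
`d_m(A,B) = ‖m‖(A △ B)`, is separable. -/
def SeparableVM (m : VectorMeasure Ω X) : Prop :=
  ∃ D : Set (Set Ω), D.Countable ∧ (∀ B ∈ D, MeasurableSet B) ∧
    ∀ A : Set Ω, MeasurableSet A → ∀ ε : ℝ, 0 < ε →
      ∃ B ∈ D, semivar m (symmDiff A B) < ENNReal.ofReal ε

section FunctionSpace

variable {S : Type*} [MeasurableSpace S]

/-- `T` is a bounded linear functional on the function space determined by the
membership predicate `mem` and the norm `nrm`. -/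
def IsBddLinFunctional (mem : (S → ℝ) → Prop) (nrm : (S → ℝ) → ℝ)
    (T : (S → ℝ) → ℝ) : Prop :=
  (∀ f g, mem f → mem g → T (f + g) = T f + T g) ∧
  (∀ (c : ℝ) (f), mem f → T (c • f) = c * T f) ∧
  (∃ C : ℝ, ∀ f, mem f → |T f| ≤ C * nrm f)

/-- `f` is a weakly null sequence in the function space `(mem, nrm)`. -/
def WeaklyNullSeq (mem : (S → ℝ) → Prop) (nrm : (S → ℝ) → ℝ) (f : ℕ → S → ℝ) : Prop :=
  ∀ T : (S → ℝ) → ℝ, IsBddLinFunctional mem nrm T →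
    Tendsto (fun n => T (f n)) atTop (nhds 0)

/-- The set `K` has uniformly absolutely continuous norm in the function space with
norm `nrm` over the measure `μ`. -/
def UnifACNorm (μ : Measure S) (nrm : (S → ℝ) → ℝ) (K : Set (S → ℝ)) : Prop :=
  ∀ ε : ℝ, 0 < ε → ∃ δ : ℝ, 0 < δ ∧ ∀ A : Set S, MeasurableSet A →
    μ A < ENNReal.ofReal δ → ∀ f ∈ K, nrm (A.indicator f) ≤ ε

/-- The subsequence splitting property for the function space `(mem, nrm)` over `μ`. -/
def HasSSP (μ : Measure S) (mem : (S → ℝ) → Prop) (nrm : (S → ℝ) → ℝ) : Prop :=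
  ∀ f : ℕ → S → ℝ, (∀ n, mem (f n)) → (∃ C : ℝ, ∀ n, nrm (f n) ≤ C) →
    ∃ σ : ℕ → ℕ, StrictMono σ ∧
      ∃ g h : ℕ → S → ℝ,
        (∀ n, mem (g n)) ∧ (∀ n, mem (h n)) ∧
        (∀ n, f (σ n) = g n + h n) ∧
        (∀ n, (fun s => g n s * h n s) =ᵐ[μ] 0) ∧
        UnifACNorm μ nrm (Set.range g) ∧
        (∀ i j, i ≠ j → (fun s => h i s * h j s) =ᵐ[μ] 0)

/-- The weak Banach-Saks property for the function space `(mem, nrm)`. -/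
def HasWBS (mem : (S → ℝ) → Prop) (nrm : (S → ℝ) → ℝ) : Prop :=
  ∀ f : ℕ → S → ℝ, (∀ n, mem (f n)) → WeaklyNullSeq mem nrm f →
    ∃ σ : ℕ → ℕ, StrictMono σ ∧
      Tendsto (fun n : ℕ => nrm ((n : ℝ)⁻¹ • ∑ k ∈ Finset.range n, f (σ k))) atTop (nhds 0)

end FunctionSpace

/-- A Banach function space over `(S, μ)`: an (abstract) normed space `X` together with
a linear embedding `J` into measurable functions on `S`, separating points modulo
`μ`-null sets and satisfying the ideal property. -/
structure BFS (S : Type*) [MeasurableSpace S] (μ : Measure S)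
    (X : Type*) [NormedAddCommGroup X] [NormedSpace ℝ X] where
  J : X →ₗ[ℝ] (S → ℝ)
  aemeasurable : ∀ x : X, AEMeasurable (J x) μ
  eq_zero : ∀ x : X, J x =ᵐ[μ] 0 → x = 0
  ideal : ∀ (x : X) (g : S → ℝ), AEMeasurable g μ →
    (∀ᵐ s ∂μ, |g s| ≤ |J x s|) → ∃ y : X, J y =ᵐ[μ] g ∧ ‖y‖ ≤ ‖x‖

variable {S : Type*} [MeasurableSpace S] {μ : Measure S}

/-- The set `K ⊆ X` has uniformly absolutely continuous norm in the B.f.s. `X`. -/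
def BFS.UnifAC (B : BFS S μ X) (K : Set X) : Prop :=
  ∀ ε : ℝ, 0 < ε → ∃ δ : ℝ, 0 < δ ∧ ∀ A : Set S, MeasurableSet A →
    μ A < ENNReal.ofReal δ → ∀ x ∈ K, ∀ y : X, B.J y =ᵐ[μ] A.indicator (B.J x) → ‖y‖ ≤ ε

/-- The B.f.s. `X` has absolutely continuous norm. -/
def BFS.ACNorm (B : BFS S μ X) : Prop :=
  ∀ x : X, ∀ ε : ℝ, 0 < ε → ∃ δ : ℝ, 0 < δ ∧ ∀ A : Set S, MeasurableSet A →
    μ A < ENNReal.ofReal δ → ∀ y : X, B.J y =ᵐ[μ] A.indicator (B.J x) → ‖y‖ ≤ ε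

/-- The subsequence splitting property for the B.f.s. `X`. -/
def BFS.SSP (B : BFS S μ X) : Prop :=
  ∀ f : ℕ → X, (∃ C : ℝ, ∀ n, ‖f n‖ ≤ C) →
    ∃ σ : ℕ → ℕ, StrictMono σ ∧
      ∃ g h : ℕ → X,
        (∀ n, f (σ n) = g n + h n) ∧
        (∀ n, (fun s => B.J (g n) s * B.J (h n) s) =ᵐ[μ] 0) ∧
        B.UnifAC (Set.range g) ∧
        (∀ i j, i ≠ j → (fun s => B.J (h i) s * B.J (h j) s) =ᵐ[μ] 0)

/-- The weak Banach-Saks property for a normed space `Z`: every weakly null sequence has a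
subsequence whose arithmetic means converge to zero in norm. -/
def WeakBanachSaks (Z : Type*) [NormedAddCommGroup Z] [NormedSpace ℝ Z] : Prop :=
  ∀ z : ℕ → Z, (∀ φ : Z →L[ℝ] ℝ, Tendsto (fun n => φ (z n)) atTop (nhds 0)) →
    ∃ σ : ℕ → ℕ, StrictMono σ ∧
      Tendsto (fun n : ℕ => ‖(n : ℝ)⁻¹ • ∑ k ∈ Finset.range n, z (σ k)‖) atTop (nhds 0)

/-!
Split a subsequence of a weakly null sequence in `L¹(m)` as `g n + h n`, with `g` of uniformly
absolutely continuous norm and `h` pairwise disjoint, and let `η = |x₀*m|` be the Rybakov measure.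

The disjoint parts tend to `0` in every `L¹(|x*m|)`: testing `g n + h n` against the sign of the
disjoint sum of the tail `(h k)_{k ≥ N}` gives `∫ |h n| d|x*m|`, up to an error which is uniformly
small in `n` since this sign is supported on a set of small `η`-measure. Hence `∫ |h n| dm` is
weakly null in `X`. Positivity of `m` gives `‖f‖ ≤ ‖∫ |f| dm‖` for `f ∈ L¹(m)`, so the weak
Banach-Saks property of `X` transfers to `h`.

It follows that `g` is weakly null and uniformly integrable in `L¹(η)`. Such a sequence is uniformly
approximated by bounded sequences in `L²(η)`, where the Banach-Saks theorem holds, so it has a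
subsequence all of whose further subsequences have Cesàro means tending to `0` in `L¹(η)`
(Szlenk's theorem). By uniform absolute continuity these means also tend to `0` in `L¹(m)`. Passing
to *all* further subsequences is what allows one subsequence to serve both `g` and `h`.
-/

section CesaroMeans

variable {E F : Type*}

/-- The arithmetic mean of the first `n` terms `x 0, …, x (n - 1)` of a sequence; it is `0` for
`n = 0`. -/
def cesaroMean [AddCommGroup E] [Module ℝ E] (x : ℕ → E) (n : ℕ) : E :=
  (n : ℝ)⁻¹ • ∑ k ∈ Finset.range n, x k

lemma cesaroMean_add [AddCommGroup E] [Module ℝ E] (x y : ℕ → E) (n : ℕ) :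
    cesaroMean (x + y) n = cesaroMean x n + cesaroMean y n := by
  simp only [cesaroMean, Pi.add_apply, Finset.sum_add_distrib, smul_add]

lemma cesaroMean_sub [AddCommGroup E] [Module ℝ E] (x y : ℕ → E) (n : ℕ) :
    cesaroMean (x - y) n = cesaroMean x n - cesaroMean y n := by
  simp only [cesaroMean, Pi.sub_apply, Finset.sum_sub_distrib, smul_sub]

lemma cesaroMean_const [AddCommGroup E] [Module ℝ E] (u : E) {n : ℕ} (hn : n ≠ 0) :
    cesaroMean (fun _ => u) n = u := by
  rw [cesaroMean, Finset.sum_const, Finset.card_range, ← Nat.cast_smul_eq_nsmul ℝ,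
    inv_smul_smul₀ (Nat.cast_ne_zero.mpr hn)]

lemma map_cesaroMean [AddCommGroup E] [Module ℝ E] [AddCommGroup F] [Module ℝ F]
    {G : Type*} [FunLike G E F] [LinearMapClass G ℝ E F] (T : G) (x : ℕ → E) (n : ℕ) :
    T (cesaroMean x n) = cesaroMean (fun k => T (x k)) n := by
  simp only [cesaroMean, map_smul, map_sum]

lemma abs_cesaroMean_le {α : Type*} (u : ℕ → α → ℝ) (n : ℕ) :
    |cesaroMean u n| ≤ cesaroMean (fun k => |u k|) n := fun ω => by
  simp only [cesaroMean, Pi.abs_apply, Pi.smul_apply, Finset.sum_apply, smul_eq_mul, abs_mul,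
    abs_inv, Nat.abs_cast]
  gcongr
  exact Finset.abs_sum_le_sum_abs _ _

lemma tendsto_cesaroMean [NormedAddCommGroup E] [NormedSpace ℝ E] {x : ℕ → E} {u : E}
    (hx : Tendsto x atTop (𝓝 u)) :
    Tendsto (cesaroMean x) atTop (𝓝 u) :=
  hx.cesaro_smul

variable [SeminormedAddCommGroup E] [NormedSpace ℝ E] [SeminormedAddCommGroup F] [NormedSpace ℝ F]

lemma norm_cesaroMean_le {x : ℕ → E} {b : ℝ} (hb : 0 ≤ b) (hx : ∀ k, ‖x k‖ ≤ b) (n : ℕ) :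
    ‖cesaroMean x n‖ ≤ b := by
  rcases eq_or_ne n 0 with rfl | hn
  · simpa [cesaroMean] using hb
  · calc ‖cesaroMean x n‖ ≤ (n : ℝ)⁻¹ * ∑ _k ∈ Finset.range n, b := by
          rw [cesaroMean, norm_smul, Real.norm_of_nonneg (by positivity)]
          gcongr
          exact norm_sum_le_of_le _ fun k _ => hx k
      _ = b := cesaroMean_const b hn

/-- A sequence which converges to `0` weakly, that is, along every continuous functional. -/
def IsWeaklyNull (x : ℕ → E) : Prop :=
  ∀ φ : StrongDual ℝ E, Tendsto (fun n => φ (x n)) atTop (𝓝 0)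

lemma IsWeaklyNull.map {x : ℕ → E} (hx : IsWeaklyNull x) (T : E →L[ℝ] F) :
    IsWeaklyNull fun n => T (x n) :=
  fun φ => hx (φ.comp T)

lemma IsWeaklyNull.comp {x : ℕ → E} (hx : IsWeaklyNull x) {σ : ℕ → ℕ} (hσ : StrictMono σ) :
    IsWeaklyNull (x ∘ σ) :=
  fun φ => (hx φ).comp hσ.tendsto_atTop

lemma IsWeaklyNull.sub_of_tendsto_zero {x y : ℕ → E} (hx : IsWeaklyNull x)
    (hy : Tendsto y atTop (𝓝 0)) : IsWeaklyNull (x - y) := fun φ => by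
  simpa using (hx φ).sub ((φ.continuous.tendsto 0).comp hy)

lemma IsWeaklyNull.isWeaklyNull_cesaroMean {x : ℕ → E} (hx : IsWeaklyNull x) :
    IsWeaklyNull (cesaroMean x) := fun φ => by
  simpa only [map_cesaroMean] using tendsto_cesaroMean (hx φ)

lemma exists_norm_le_of_forall_dual {ι : Type*} {x : ι → E}
    (hx : ∀ φ : StrongDual ℝ E, ∃ C, ∀ i, ‖φ (x i)‖ ≤ C) : ∃ C, ∀ i, ‖x i‖ ≤ C := by
  obtain ⟨C, hC⟩ := banach_steinhaus (g := fun i => NormedSpace.inclusionInDoubleDual ℝ E (x i)) hx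
  exact ⟨C, fun i => ((NormedSpace.inclusionInDoubleDualLi ℝ).norm_map (x i)).symm.trans_le (hC i)⟩

lemma IsWeaklyNull.exists_norm_le {x : ℕ → E} (hx : IsWeaklyNull x) : ∃ C, ∀ n, ‖x n‖ ≤ C := by
  refine exists_norm_le_of_forall_dual fun φ => ?_
  obtain ⟨C, hC⟩ := (hx φ).norm.bddAbove_range
  exact ⟨C, fun n => hC (Set.mem_range_self n)⟩

lemma norm_le_of_isWeaklyNull_of_eventually_norm_sub_le {x : ℕ → E} {u : E} {ε : ℝ}
    (hε : 0 ≤ ε) (hx : IsWeaklyNull x) (h : ∀ᶠ n in atTop, ‖x n - u‖ ≤ ε) : ‖u‖ ≤ ε := by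
  refine NormedSpace.norm_le_dual_bound ℝ u hε fun φ => ?_
  have hlim : Tendsto (fun n => ‖φ (x n - u)‖) atTop (𝓝 ‖φ u‖) := by
    simpa using ((hx φ).sub_const (φ u)).norm
  refine le_of_tendsto hlim (h.mono fun n hn => ?_)
  calc ‖φ (x n - u)‖ ≤ ‖φ‖ * ‖x n - u‖ := φ.le_opNorm _
    _ ≤ ‖φ‖ * ε := by gcongr
    _ = ε * ‖φ‖ := mul_comm _ _

lemma IsWeaklyNull.tendsto_cesaroMean_zero {x : ℕ → E} (hx : IsWeaklyNull x)
    (happrox : ∀ ε > 0, ∃ (y : ℕ → E) (u : E),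
      Tendsto (cesaroMean y) atTop (𝓝 u) ∧ ∀ n, ‖x n - y n‖ ≤ ε) :
    Tendsto (cesaroMean x) atTop (𝓝 0) := by
  refine Metric.tendsto_atTop.mpr fun ε hε => ?_
  obtain ⟨y, u, hyu, hxy⟩ := happrox (ε / 5) (by positivity)
  have hclose : ∀ᶠ n in atTop, ‖cesaroMean x n - u‖ ≤ 2 * (ε / 5) := by
    filter_upwards [Metric.tendsto_nhds.mp hyu (ε / 5) (by positivity)] with n hn
    have hmean : ‖cesaroMean x n - cesaroMean y n‖ ≤ ε / 5 := by
      rw [← cesaroMean_sub]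
      exact norm_cesaroMean_le (by positivity) hxy n
    rw [dist_eq_norm] at hn
    linarith [norm_sub_le_norm_sub_add_norm_sub (cesaroMean x n) (cesaroMean y n) u]
  have hu := norm_le_of_isWeaklyNull_of_eventually_norm_sub_le (by positivity)
    hx.isWeaklyNull_cesaroMean hclose
  obtain ⟨N, hN⟩ := eventually_atTop.mp hclose
  refine ⟨N, fun n hn => ?_⟩
  rw [dist_zero_right]
  linarith [norm_le_norm_sub_add (cesaroMean x n) u, hN n hn]

/-- A sequence all of whose subsequences have Cesàro means converging to the same limit `u`. -/
def HereditarilyCesaro (x : ℕ → E) (u : E) : Prop :=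
  ∀ τ : ℕ → ℕ, StrictMono τ → Tendsto (cesaroMean (x ∘ τ)) atTop (𝓝 u)

lemma hereditarilyCesaro_of_sub_const {x : ℕ → E} {u : E}
    (hx : HereditarilyCesaro (fun n => x n - u) 0) : HereditarilyCesaro x u := fun τ hτ => by
  have hlim := (hx τ hτ).add_const u
  rw [zero_add] at hlim
  refine hlim.congr' ((eventually_ne_atTop 0).mono fun n hn => ?_)
  have hsplit : (fun n => x n - u) ∘ τ = x ∘ τ - fun _ => u := rfl
  rw [hsplit, cesaroMean_sub, cesaroMean_const u hn, sub_add_cancel]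

end CesaroMeans

section HilbertSpace

open scoped InnerProductSpace

variable {H : Type*} [NormedAddCommGroup H] [InnerProductSpace ℝ H]

lemma norm_sum_range_sq_le {y : ℕ → H} {c : ℕ → ℝ} {D : ℝ} (hD : ∀ n, ‖y n‖ ≤ D)
    (hinner : ∀ i j, i < j → |⟪y i, y j⟫_ℝ| ≤ c i) (n : ℕ) :
    ‖∑ k ∈ Finset.range n, y k‖ ^ 2 ≤ n * (D ^ 2 + 2 * ∑ k ∈ Finset.range n, c k) := by
  induction n with
  | zero => simp
  | succ n ih =>
    have hcross : ⟪∑ k ∈ Finset.range n, y k, y n⟫_ℝ ≤ ∑ k ∈ Finset.range n, c k := by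
      rw [sum_inner]
      exact Finset.sum_le_sum fun k hk =>
        (le_abs_self _).trans (hinner k n (Finset.mem_range.mp hk))
    have hlast : ‖y n‖ ^ 2 ≤ D ^ 2 := by gcongr; exact hD n
    have hcn : 0 ≤ c n := (abs_nonneg _).trans (hinner n (n + 1) n.lt_succ_self)
    rw [Finset.sum_range_succ, Finset.sum_range_succ, norm_add_sq_real]
    push_cast
    nlinarith [mul_nonneg n.cast_nonneg hcn]

lemma norm_cesaroMean_sq_le {y : ℕ → H} {c : ℕ → ℝ} {D : ℝ} (hD : ∀ n, ‖y n‖ ≤ D)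
    (hinner : ∀ i j, i < j → |⟪y i, y j⟫_ℝ| ≤ c i) (n : ℕ) :
    ‖cesaroMean y n‖ ^ 2 ≤ (n : ℝ)⁻¹ * D ^ 2 + 2 * cesaroMean c n := by
  rcases eq_or_ne n 0 with rfl | hn
  · simp [cesaroMean]
  calc ‖cesaroMean y n‖ ^ 2 = (n : ℝ)⁻¹ ^ 2 * ‖∑ k ∈ Finset.range n, y k‖ ^ 2 := by
        rw [cesaroMean, norm_smul, mul_pow, Real.norm_of_nonneg (by positivity)]
    _ ≤ (n : ℝ)⁻¹ ^ 2 * (n * (D ^ 2 + 2 * ∑ k ∈ Finset.range n, c k)) := by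
        gcongr
        exact norm_sum_range_sq_le hD hinner n
    _ = (n : ℝ)⁻¹ * D ^ 2 + 2 * cesaroMean c n := by
        rw [cesaroMean, smul_eq_mul]
        field_simp

lemma tendsto_cesaroMean_zero_of_inner_le {y : ℕ → H} {c : ℕ → ℝ} {D : ℝ}
    (hD : ∀ n, ‖y n‖ ≤ D) (hc : Tendsto c atTop (𝓝 0))
    (hinner : ∀ᶠ i in atTop, ∀ j, i < j → |⟪y i, y j⟫_ℝ| ≤ c i) :
    Tendsto (cesaroMean y) atTop (𝓝 0) := by
  obtain ⟨N, hN⟩ := eventually_atTop.mp hinner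
  let c' : ℕ → ℝ := fun i => if N ≤ i then c i else D * D
  have hc' : Tendsto c' atTop (𝓝 0) :=
    hc.congr' ((eventually_ge_atTop N).mono fun i hi => (if_pos hi).symm)
  have hinner' : ∀ i j, i < j → |⟪y i, y j⟫_ℝ| ≤ c' i := fun i j hij => by
    rcases le_or_gt N i with hi | hi
    · exact (hN i hi j hij).trans_eq (if_pos hi).symm
    · calc |⟪y i, y j⟫_ℝ| ≤ ‖y i‖ * ‖y j‖ := abs_real_inner_le_norm _ _
        _ ≤ D * D := mul_le_mul (hD i) (hD j) (norm_nonneg _) ((norm_nonneg _).trans (hD i))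
        _ = c' i := (if_neg hi.not_ge).symm
  have hbound : Tendsto (fun n : ℕ => (n : ℝ)⁻¹ * D ^ 2 + 2 * cesaroMean c' n) atTop (𝓝 0) := by
    simpa using (tendsto_inv_atTop_nhds_zero_nat.mul_const (D ^ 2)).add
      ((tendsto_cesaroMean hc').const_mul 2)
  have hsq : Tendsto (fun n => ‖cesaroMean y n‖ ^ 2) atTop (𝓝 0) :=
    squeeze_zero (fun n => sq_nonneg _) (norm_cesaroMean_sq_le hD hinner') hbound
  exact tendsto_zero_iff_norm_tendsto_zero.mpr (by simpa using hsq.sqrt)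

lemma hereditarilyCesaro_zero_of_inner_le {y : ℕ → H} {c : ℕ → ℝ} {D : ℝ}
    (hD : ∀ n, ‖y n‖ ≤ D) (hc : Tendsto c atTop (𝓝 0))
    (hinner : ∀ᶠ i in atTop, ∀ j, i < j → |⟪y i, y j⟫_ℝ| ≤ c i) :
    HereditarilyCesaro y 0 := fun τ hτ =>
  tendsto_cesaroMean_zero_of_inner_le (fun n => hD (τ n)) (hc.comp hτ.tendsto_atTop)
    ((hτ.tendsto_atTop.eventually hinner).mono fun _ hi j hij => hi (τ j) (hτ hij))

variable [CompleteSpace H]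

lemma exists_tendsto_inner_hyperfilter {x : ℕ → H} {C : ℝ} (hC : ∀ n, ‖x n‖ ≤ C) :
    ∃ u : H, ∀ v : H, Tendsto (fun n => ⟪v, x n - u⟫_ℝ) (hyperfilter ℕ : Filter ℕ) (𝓝 0) := by
  let φ : ℕ → WeakDual ℝ H := fun n => StrongDual.toWeakDual (innerSL ℝ (x n))
  have hmem : ∀ n, φ n ∈ WeakDual.toStrongDual ⁻¹' Metric.closedBall (0 : StrongDual ℝ H) C :=
    fun n => by simpa [φ] using hC n
  obtain ⟨p, -, hp⟩ := (WeakDual.isCompact_closedBall 0 C).ultrafilter_le_nhds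
    ((hyperfilter ℕ).map φ) (le_principal_iff.mpr (mem_map.mpr (univ_mem' hmem)))
  have hφ : Tendsto φ (hyperfilter ℕ : Filter ℕ) (𝓝 p) := hp
  refine ⟨(InnerProductSpace.toDual ℝ H).symm (WeakDual.toStrongDual p), fun v => ?_⟩
  have hlim := (((WeakDual.eval_continuous v).tendsto p).comp hφ).sub_const (p v)
  rw [sub_self] at hlim
  refine hlim.congr fun n => ?_
  rw [real_inner_comm, inner_sub_left, InnerProductSpace.toDual_symm_apply]
  rfl

-- The diagonal choice makes the centred sequences almost orthogonal: each new index is picked in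
-- the hyperfilter-large set where finitely many inner products with earlier terms are small.
lemma exists_strictMono_hereditarilyCesaro {x : ℕ → ℕ → H}
    (hx : ∀ M, ∃ C, ∀ n, ‖x M n‖ ≤ C) :
    ∃ σ : ℕ → ℕ, StrictMono σ ∧ ∀ M, ∃ u, HereditarilyCesaro (x M ∘ σ) u := by
  choose C hC using hx
  choose u hu using fun M => exists_tendsto_inner_hyperfilter (hC M)
  let AlmostOrthogonal (a b : ℕ) : Prop :=
    a < b ∧ ∀ M ≤ a, |⟪x M a - u M, x M b - u M⟫_ℝ| ≤ 1 / ((a : ℝ) + 1)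
  have hnext : ∀ a, ∀ᶠ b in (hyperfilter ℕ : Filter ℕ), AlmostOrthogonal a b := fun a =>
    ((eventually_gt_atTop a).filter_mono Nat.hyperfilter_le_atTop).and <|
      (Set.finite_Iic a).eventually_all.mpr fun M _ =>
        (hu M (x M a - u M)).abs.eventually_le_const (by simpa using by positivity)
  obtain ⟨σ, -, hσ⟩ := exists_seq_of_forall_finset_exists (fun _ => True) AlmostOrthogonal
    fun s _ => by simpa using ((s.eventually_all).mpr fun a _ => hnext a).exists
  have hmono : StrictMono σ := fun i j hij => (hσ i j hij).1
  refine ⟨σ, hmono, fun M => ⟨u M, hereditarilyCesaro_of_sub_const ?_⟩⟩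
  refine hereditarilyCesaro_zero_of_inner_le (D := C M + ‖u M‖)
    (fun n => (norm_sub_le _ _).trans (by gcongr; exact hC M _))
    (tendsto_one_div_add_atTop_nhds_zero_nat.comp hmono.tendsto_atTop) ?_
  filter_upwards [eventually_ge_atTop M] with i hi j hij
  exact (hσ i j hij).2 M (hi.trans (hmono.id_le i))

theorem IsWeaklyNull.exists_strictMono_hereditarilyCesaro {E : Type*} [SeminormedAddCommGroup E]
    [NormedSpace ℝ E] {x : ℕ → E} (hx : IsWeaklyNull x) (T : H →L[ℝ] E)
    (happrox : ∀ ε > 0, ∃ y : ℕ → H, (∃ C, ∀ n, ‖y n‖ ≤ C) ∧ ∀ n, ‖x n - T (y n)‖ ≤ ε) :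
    ∃ σ : ℕ → ℕ, StrictMono σ ∧ HereditarilyCesaro (x ∘ σ) 0 := by
  choose y hybdd hxy using fun M : ℕ => happrox (1 / ((M : ℝ) + 1)) (by positivity)
  obtain ⟨σ, hσ, hces⟩ := Paper.exists_strictMono_hereditarilyCesaro hybdd
  refine ⟨σ, hσ, fun τ hτ => ((hx.comp hσ).comp hτ).tendsto_cesaroMean_zero fun ε hε => ?_⟩
  obtain ⟨M, hM⟩ := exists_nat_one_div_lt hε
  obtain ⟨u, hu⟩ := hces M
  refine ⟨fun n => T (y M (σ (τ n))), T u, ?_, fun n => (hxy M _).trans hM.le⟩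
  refine ((T.continuous.tendsto u).comp (hu τ hτ)).congr fun n => ?_
  exact map_cesaroMean T (y M ∘ σ ∘ τ) n

end HilbertSpace

section UniformlyIntegrable

variable {α G : Type*} {mα : MeasurableSpace α} {η : Measure α} [IsFiniteMeasure η]
  [NormedAddCommGroup G] [InnerProductSpace ℝ G]

/-- The continuous inclusion of `L²(η)` into `L¹(η)` for a finite measure `η`, realised as Hölder
multiplication by the constant function `1 ∈ L²(η)`. -/
def lpTwoToLpOne (η : Measure α) [IsFiniteMeasure η] : Lp G 2 η →L[ℝ] Lp G 1 η :=
  (ContinuousLinearMap.lsmul ℝ ℝ).holderL η 2 2 1 (Lp.const 2 η 1)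

lemma coeFn_lpTwoToLpOne (y : Lp G 2 η) : lpTwoToLpOne η y =ᵐ[η] y := by
  filter_upwards [(ContinuousLinearMap.lsmul ℝ ℝ).coeFn_holder (r := 1) (Lp.const 2 η (1 : ℝ)) y,
    Lp.coeFn_const 2 η (1 : ℝ)] with ω hmul hone
  rw [lpTwoToLpOne, ContinuousLinearMap.holderL_apply_apply, hmul, hone]
  simp

lemma exists_lpTwo_bounded_norm_sub_le {ι : Type*} {f : ι → Lp G 1 η}
    (hf : UniformIntegrable (fun i => f i) 1 η) {ε : ℝ} (hε : 0 < ε) :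
    ∃ y : ι → Lp G 2 η, (∃ D, ∀ i, ‖y i‖ ≤ D) ∧ ∀ i, ‖f i - lpTwoToLpOne η (y i)‖ ≤ ε := by
  obtain ⟨C, hC⟩ := hf.spec one_ne_zero ENNReal.one_ne_top hε
  let large (i : ι) : Set α := {ω | C ≤ ‖f i ω‖₊}
  have hlarge : ∀ i, MeasurableSet (large i) := fun i =>
    measurableSet_le measurable_const (Lp.stronglyMeasurable (f i)).nnnorm.measurable
  have hbound : ∀ i, ∀ᵐ ω ∂η, ‖(large i)ᶜ.indicator (f i) ω‖ ≤ C := fun i => ae_of_all _ fun ω => by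
    rw [Set.indicator_apply]
    split_ifs with hω
    · exact (lt_of_not_ge (show ¬C ≤ ‖f i ω‖₊ from hω)).le
    · simp
  have hmem : ∀ i, MemLp ((large i)ᶜ.indicator (f i)) 2 η := fun i =>
    .of_bound ((Lp.aestronglyMeasurable (f i)).indicator (hlarge i).compl) C (hbound i)
  refine ⟨fun i => (hmem i).toLp, ⟨_, fun i => Lp.norm_le_of_ae_bound C.coe_nonneg ?_⟩,
    fun i => ?_⟩
  · filter_upwards [(hmem i).coeFn_toLp, hbound i] with ω hω hle
    rwa [hω]
  · have htail : f i - lpTwoToLpOne η (hmem i).toLp =ᵐ[η] (large i).indicator (f i) := by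
      filter_upwards [Lp.coeFn_sub (f i) (lpTwoToLpOne η (hmem i).toLp),
        coeFn_lpTwoToLpOne (hmem i).toLp, (hmem i).coeFn_toLp] with ω hsub hincl htoLp
      rw [hsub, Pi.sub_apply, hincl, htoLp, sub_eq_iff_eq_add, ← Pi.add_apply,
        Set.indicator_self_add_compl]
    rw [Lp.norm_def, eLpNorm_congr_ae htail]
    exact ENNReal.toReal_le_of_le_ofReal hε.le (hC i)

theorem exists_strictMono_hereditarilyCesaro_of_uniformIntegrable [CompleteSpace G]
    {f : ℕ → Lp G 1 η} (hweak : IsWeaklyNull f) (hf : UniformIntegrable (fun n => f n) 1 η) :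
    ∃ σ : ℕ → ℕ, StrictMono σ ∧ HereditarilyCesaro (f ∘ σ) 0 :=
  hweak.exists_strictMono_hereditarilyCesaro (lpTwoToLpOne η) fun _ hε =>
    exists_lpTwo_bounded_norm_sub_le hf hε

end UniformlyIntegrable

section SignedMeasure

lemma totalVariation_nnreal_smul (s : SignedMeasure Ω) (r : NNReal) :
    (r • s).totalVariation = r • s.totalVariation := by
  simp only [SignedMeasure.totalVariation, SignedMeasure.toJordanDecomposition_smul,
    JordanDecomposition.smul_posPart, JordanDecomposition.smul_negPart, smul_add]

lemma negPart_toJordanDecomposition_eq_zero {s : SignedMeasure Ω}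
    (hs : ∀ A, MeasurableSet A → 0 ≤ s A) : s.toJordanDecomposition.negPart = 0 := by
  obtain ⟨P, hP, hposP, hnegPc⟩ := s.toJordanDecomposition.mutuallySingular
  have hnegP : s.toJordanDecomposition.negPart.real P ≤ 0 := by
    have hsP := hs P hP
    rw [SignedMeasure.apply_eq_posPart_real_sub_negPart_real _ hP, measureReal_def _ P,
      hposP] at hsP
    simpa using hsP
  have hnegP' : s.toJordanDecomposition.negPart P = 0 :=
    (measureReal_eq_zero_iff).mp (hnegP.antisymm measureReal_nonneg)
  exact Measure.measure_univ_eq_zero.mp (Set.union_compl_self P ▸ measure_union_null hnegP' hnegPc)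

variable {s : SignedMeasure Ω} {f g : Ω → ℝ}

lemma integral_totalVariation (hf : Integrable f s.totalVariation) :
    ∫ ω, f ω ∂s.totalVariation = ∫ ω, f ω ∂s.toJordanDecomposition.posPart
      + ∫ ω, f ω ∂s.toJordanDecomposition.negPart :=
  integral_add_measure hf.left_of_add_measure hf.right_of_add_measure

lemma sIntegral_add (hf : Integrable f s.totalVariation) (hg : Integrable g s.totalVariation)
    (A : Set Ω) : sIntegral s (f + g) A = sIntegral s f A + sIntegral s g A := by
  simp only [sIntegral, Pi.add_apply]
  rw [integral_add hf.left_of_add_measure.integrableOn hg.left_of_add_measure.integrableOn,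
    integral_add hf.right_of_add_measure.integrableOn hg.right_of_add_measure.integrableOn]
  ring

lemma sIntegral_smul (s : SignedMeasure Ω) (c : ℝ) (f : Ω → ℝ) (A : Set Ω) :
    sIntegral s (c • f) A = c * sIntegral s f A := by
  simp only [sIntegral, Pi.smul_apply, smul_eq_mul, integral_const_mul, mul_sub]

lemma sIntegral_indicator (s : SignedMeasure Ω) (f : Ω → ℝ) (A : Set Ω) {Q : Set Ω}
    (hQ : MeasurableSet Q) : sIntegral s (Q.indicator f) A = sIntegral s f (A ∩ Q) := by
  simp only [sIntegral, setIntegral_indicator hQ]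

lemma sIntegral_one (s : SignedMeasure Ω) {A : Set Ω} (hA : MeasurableSet A) :
    sIntegral s 1 A = s A := by
  simp [sIntegral, SignedMeasure.apply_eq_posPart_real_sub_negPart_real s hA]

lemma abs_sIntegral_le (hf : Integrable f s.totalVariation) (A : Set Ω) :
    |sIntegral s f A| ≤ ∫ ω, |f ω| ∂s.totalVariation := by
  have hle : ∀ {ν : Measure Ω}, Integrable f ν → |∫ ω in A, f ω ∂ν| ≤ ∫ ω, |f ω| ∂ν := fun hν =>
    abs_integral_le_integral_abs.trans
      (setIntegral_le_integral hν.abs (ae_of_all _ fun _ => abs_nonneg _))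
  rw [integral_totalVariation hf.abs]
  exact (abs_sub _ _).trans
    (add_le_add (hle hf.left_of_add_measure) (hle hf.right_of_add_measure))

lemma sIntegral_nonneg (hs : ∀ A, MeasurableSet A → 0 ≤ s A) (hf : 0 ≤ f) (A : Set Ω) :
    0 ≤ sIntegral s f A := by
  rw [sIntegral, negPart_toJordanDecomposition_eq_zero hs, Measure.restrict_zero,
    integral_zero_measure, sub_zero]
  exact integral_nonneg hf

lemma exists_integral_totalVariation_eq (hf : Integrable f s.totalVariation) :
    ∃ P, MeasurableSet P ∧
      ∫ ω, f ω ∂s.totalVariation = sIntegral s f P - sIntegral s f Pᶜ := by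
  obtain ⟨N, hN, hposN, hnegNc⟩ := s.toJordanDecomposition.mutuallySingular
  refine ⟨Nᶜ, hN.compl, ?_⟩
  rw [integral_totalVariation hf, compl_compl, sIntegral, sIntegral,
    Measure.restrict_eq_zero.mpr hposN, Measure.restrict_eq_zero.mpr hnegNc,
    ← integral_add_compl hN hf.left_of_add_measure, ← integral_add_compl hN hf.right_of_add_measure,
    Measure.restrict_eq_zero.mpr hposN, Measure.restrict_eq_zero.mpr hnegNc]
  simp

end SignedMeasure

section VectorIntegral

variable {m : VectorMeasure Ω X} {f g : Ω → ℝ}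

lemma dualApply_apply (m : VectorMeasure Ω X) (x : X →L[ℝ] ℝ) (A : Set Ω) :
    dualApply m x A = x (m A) := rfl

lemma MIntegrable.add (hf : MIntegrable m f) (hg : MIntegrable m g) : MIntegrable m (f + g) := by
  refine ⟨hf.1.add hg.1, fun x => (hf.2.1 x).add (hg.2.1 x), fun A hA => ?_⟩
  obtain ⟨v, hv⟩ := hf.2.2 A hA
  obtain ⟨w, hw⟩ := hg.2.2 A hA
  exact ⟨v + w, fun x => by rw [map_add, hv, hw, sIntegral_add (hf.2.1 x) (hg.2.1 x)]⟩

lemma MIntegrable.smul (c : ℝ) (hf : MIntegrable m f) : MIntegrable m (c • f) := by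
  refine ⟨hf.1.const_smul c, fun x => (hf.2.1 x).smul c, fun A hA => ?_⟩
  obtain ⟨v, hv⟩ := hf.2.2 A hA
  exact ⟨c • v, fun x => by rw [map_smul, hv, sIntegral_smul, smul_eq_mul]⟩

lemma MIntegrable.indicator (hf : MIntegrable m f) {Q : Set Ω} (hQ : MeasurableSet Q) :
    MIntegrable m (Q.indicator f) := by
  refine ⟨hf.1.indicator hQ, fun x => (hf.2.1 x).indicator hQ, fun A hA => ?_⟩
  obtain ⟨v, hv⟩ := hf.2.2 (A ∩ Q) (hA.inter hQ)
  exact ⟨v, fun x => by rw [hv, sIntegral_indicator _ _ _ hQ]⟩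

lemma MIntegrable.abs (hf : MIntegrable m f) : MIntegrable m |f| := by
  let Q : Set Ω := {ω | 0 ≤ f ω}
  have hQ : MeasurableSet Q := measurableSet_le measurable_const hf.1
  have hsplit : |f| = Q.indicator f + (-1 : ℝ) • Qᶜ.indicator f := by
    ext ω
    by_cases hω : 0 ≤ f ω
    · simp [Q, hω, abs_of_nonneg hω]
    · simp [Q, hω, abs_of_neg (not_le.mp hω)]
  exact hsplit ▸ (hf.indicator hQ).add ((hf.indicator hQ.compl).smul _)

lemma mIntegrable_one (m : VectorMeasure Ω X) : MIntegrable m 1 :=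
  ⟨measurable_const, fun _ => integrable_const _, fun A hA =>
    ⟨m A, fun x => by rw [sIntegral_one _ hA, dualApply_apply]⟩⟩

lemma mIntegrable_zero (m : VectorMeasure Ω X) : MIntegrable m 0 := by
  simpa using (mIntegrable_one m).smul 0

lemma apply_mIntegral (hf : MIntegrable m f) (x : X →L[ℝ] ℝ) {A : Set Ω} (hA : MeasurableSet A) :
    x (mIntegral m f A) = sIntegral (dualApply m x) f A := by
  have hex := hf.2.2 A hA
  rw [mIntegral, dif_pos hex]
  exact hex.choose_spec x

-- The integrals `∫_A |f| dm` are weakly bounded, hence bounded, and `∫ |f| d|x*m|` is a difference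
-- of two values of `x*` on them.
lemma MIntegrable.bddAbove_integral_abs (hf : MIntegrable m f) :
    BddAbove (Set.range fun x : {x : X →L[ℝ] ℝ // ‖x‖ ≤ 1} =>
      ∫ ω, |f ω| ∂(dualApply m x.1).totalVariation) := by
  obtain ⟨C, hC⟩ : ∃ C, ∀ A : {A : Set Ω // MeasurableSet A}, ‖mIntegral m |f| A‖ ≤ C :=
    exists_norm_le_of_forall_dual fun φ =>
      ⟨_, fun A => (congrArg _ (apply_mIntegral hf.abs φ A.2)).trans_le
        (abs_sIntegral_le (hf.abs.2.1 φ) A)⟩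
  refine ⟨C + C, Set.forall_mem_range.mpr fun ⟨x, hx⟩ => ?_⟩
  have hle : ∀ A, MeasurableSet A → |sIntegral (dualApply m x) |f| A| ≤ C := fun A hA => by
    rw [← apply_mIntegral hf.abs x hA]
    exact (x.le_of_opNorm_le hx _).trans (by simpa using hC ⟨A, hA⟩)
  obtain ⟨P, hP, hsum⟩ := exists_integral_totalVariation_eq (hf.abs.2.1 x)
  exact hsum.trans_le ((le_abs_self _).trans
    ((abs_sub _ _).trans (add_le_add (hle P hP) (hle Pᶜ hP.compl))))

end VectorIntegral

section LOneNorm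

variable {m : VectorMeasure Ω X} {f g : Ω → ℝ}

lemma exists_norm_le_one_nnnorm_smul_eq {E : Type*} [NormedAddCommGroup E] [NormedSpace ℝ E]
    (x : E) : ∃ y : E, ‖y‖ ≤ 1 ∧ ‖x‖₊ • y = x := by
  rcases eq_or_ne x 0 with rfl | hx
  · exact ⟨0, by simp⟩
  · exact ⟨‖x‖⁻¹ • x, (norm_smul_inv_norm (𝕜 := ℝ) hx).le,
      smul_inv_smul₀ (norm_ne_zero_iff.mpr hx) x⟩

lemma totalVariation_dualApply_nnreal_smul (m : VectorMeasure Ω X) (r : NNReal)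
    (x : X →L[ℝ] ℝ) :
    (dualApply m (r • x)).totalVariation = r • (dualApply m x).totalVariation := by
  rw [← totalVariation_nnreal_smul]
  rfl

lemma totalVariation_dualApply_eq_zero {A : Set Ω} (hA : semivar m A = 0) (x : X →L[ℝ] ℝ) :
    (dualApply m x).totalVariation A = 0 := by
  obtain ⟨y, hy, hyx⟩ := exists_norm_le_one_nnnorm_smul_eq x
  have hyA : (dualApply m y).totalVariation A = 0 := ENNReal.iSup_eq_zero.mp hA ⟨y, hy⟩
  rw [← hyx, totalVariation_dualApply_nnreal_smul, Measure.smul_apply, hyA, smul_zero]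

lemma mNorm_nonneg (m : VectorMeasure Ω X) (f : Ω → ℝ) : 0 ≤ mNorm m f :=
  Real.iSup_nonneg fun _ => integral_nonneg fun _ => abs_nonneg _

lemma mNorm_le {C : ℝ}
    (h : ∀ x : X →L[ℝ] ℝ, ‖x‖ ≤ 1 → ∫ ω, |f ω| ∂(dualApply m x).totalVariation ≤ C) :
    mNorm m f ≤ C :=
  have : Nonempty {x : X →L[ℝ] ℝ // ‖x‖ ≤ 1} := ⟨0, by simp⟩
  ciSup_le fun x => h x.1 x.2

lemma MIntegrable.integral_abs_le_mNorm (hf : MIntegrable m f) {x : X →L[ℝ] ℝ} (hx : ‖x‖ ≤ 1) :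
    ∫ ω, |f ω| ∂(dualApply m x).totalVariation ≤ mNorm m f :=
  le_ciSup hf.bddAbove_integral_abs ⟨x, hx⟩

lemma MIntegrable.integral_abs_le_norm_mul_mNorm (hf : MIntegrable m f) (x : X →L[ℝ] ℝ) :
    ∫ ω, |f ω| ∂(dualApply m x).totalVariation ≤ ‖x‖ * mNorm m f := by
  obtain ⟨y, hy, hyx⟩ := exists_norm_le_one_nnnorm_smul_eq x
  calc ∫ ω, |f ω| ∂(dualApply m x).totalVariation
      = ‖x‖ * ∫ ω, |f ω| ∂(dualApply m y).totalVariation := by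
        conv_lhs => rw [← hyx, totalVariation_dualApply_nnreal_smul, integral_smul_nnreal_measure]
        rfl
    _ ≤ ‖x‖ * mNorm m f := by
        gcongr
        exact hf.integral_abs_le_mNorm hy

lemma MIntegrable.mNorm_add_le (hf : MIntegrable m f) (hg : MIntegrable m g) :
    mNorm m (f + g) ≤ mNorm m f + mNorm m g := mNorm_le fun x hx =>
  calc ∫ ω, |(f + g) ω| ∂(dualApply m x).totalVariation
      ≤ ∫ ω, (|f ω| + |g ω|) ∂(dualApply m x).totalVariation :=
        integral_mono ((hf.add hg).2.1 x).abs ((hf.2.1 x).abs.add (hg.2.1 x).abs)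
          fun _ => abs_add_le _ _
    _ = ∫ ω, |f ω| ∂(dualApply m x).totalVariation
        + ∫ ω, |g ω| ∂(dualApply m x).totalVariation :=
        integral_add (hf.2.1 x).abs (hg.2.1 x).abs
    _ ≤ mNorm m f + mNorm m g :=
        add_le_add (hf.integral_abs_le_mNorm hx) (hg.integral_abs_le_mNorm hx)

lemma mNorm_smul (m : VectorMeasure Ω X) (c : ℝ) (f : Ω → ℝ) :
    mNorm m (c • f) = |c| * mNorm m f := by
  simp only [mNorm, Pi.smul_apply, smul_eq_mul, abs_mul, integral_const_mul]
  exact (Real.mul_iSup_of_nonneg (abs_nonneg c) _).symm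

lemma MIntegrable.mNorm_le_mNorm (hg : MIntegrable m g) (hfg : |f| ≤ |g|) :
    mNorm m f ≤ mNorm m g := mNorm_le fun x hx =>
  (integral_mono_of_nonneg (ae_of_all _ fun _ => abs_nonneg _) (hg.2.1 x).abs
    (ae_of_all _ hfg)).trans (hg.integral_abs_le_mNorm hx)

end LOneNorm

section VectorL1

variable {m : VectorMeasure Ω X}

/-- The space of `m`-integrable functions as a submodule of all functions. -/
def mIntegrableSubmodule (m : VectorMeasure Ω X) : Submodule ℝ (Ω → ℝ) where
  carrier := {f | MIntegrable m f}
  add_mem' := MIntegrable.add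
  zero_mem' := mIntegrable_zero m
  smul_mem' c _ := MIntegrable.smul c

/-- The space `L¹(m)` of `m`-integrable functions with the seminorm `mNorm m`. Functions which agree
`‖m‖`-almost everywhere are not identified, so this is only a seminormed space; it is a type synonym
so as not to inherit the topology of pointwise convergence. -/
def VectorL1 (m : VectorMeasure Ω X) : Type _ := mIntegrableSubmodule m

namespace VectorL1

instance : AddCommGroup (VectorL1 m) := inferInstanceAs (AddCommGroup (mIntegrableSubmodule m))

instance : Module ℝ (VectorL1 m) := inferInstanceAs (Module ℝ (mIntegrableSubmodule m))

instance : CoeFun (VectorL1 m) fun _ => Ω → ℝ := ⟨Subtype.val⟩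

instance : Norm (VectorL1 m) := ⟨fun f => mNorm m f⟩

lemma normCore : SeminormedSpace.Core ℝ (VectorL1 m) where
  norm_nonneg _ := mNorm_nonneg m _
  norm_smul c _ := mNorm_smul m c _
  norm_triangle f g := f.2.mNorm_add_le g.2

instance : SeminormedAddCommGroup (VectorL1 m) := .ofCore normCore

instance : NormedSpace ℝ (VectorL1 m) where
  norm_smul_le c f := (mNorm_smul m c f).le

lemma norm_le_norm {f g : VectorL1 m} (hfg : |(f : Ω → ℝ)| ≤ |(g : Ω → ℝ)|) : ‖f‖ ≤ ‖g‖ :=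
  g.2.mNorm_le_mNorm hfg

lemma coe_cesaroMean (f : ℕ → VectorL1 m) (n : ℕ) :
    ⇑(cesaroMean f n) = cesaroMean (fun k => ⇑(f k)) n :=
  map_cesaroMean (mIntegrableSubmodule m).subtype f n

/-- The inclusion of `L¹(m)` into `L¹(|x*m|)`. -/
def toL1 (m : VectorMeasure Ω X) (x : X →L[ℝ] ℝ) :
    VectorL1 m →L[ℝ] Lp ℝ 1 (dualApply m x).totalVariation :=
  LinearMap.mkContinuous
    { toFun := fun f => (f.2.2.1 x).toL1 f
      map_add' := fun _ _ => rfl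
      map_smul' := fun _ _ => rfl }
    ‖x‖ fun f => (L1.norm_of_fun_eq_integral_norm (f.2.2.1 x)).trans_le
      (f.2.integral_abs_le_norm_mul_mNorm x)

lemma coeFn_toL1 (x : X →L[ℝ] ℝ) (f : VectorL1 m) :
    toL1 m x f =ᵐ[(dualApply m x).totalVariation] f :=
  (f.2.2.1 x).coeFn_toL1

lemma norm_toL1 (x : X →L[ℝ] ℝ) (f : VectorL1 m) :
    ‖toL1 m x f‖ = ∫ ω, |f ω| ∂(dualApply m x).totalVariation :=
  L1.norm_of_fun_eq_integral_norm (f.2.2.1 x)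

/-- The integration map `f ↦ ∫ f dm` from `L¹(m)` to `X`. -/
def integral (m : VectorMeasure Ω X) : VectorL1 m →ₗ[ℝ] X where
  toFun f := mIntegral m f Set.univ
  map_add' f g := SeparatingDual.eq_iff_forall_dual_eq (R := ℝ) |>.mpr fun φ => by
    rw [map_add, apply_mIntegral f.2 φ .univ, apply_mIntegral g.2 φ .univ,
      apply_mIntegral (f + g).2 φ .univ]
    exact sIntegral_add (f.2.2.1 φ) (g.2.2.1 φ) _
  map_smul' c f := SeparatingDual.eq_iff_forall_dual_eq (R := ℝ) |>.mpr fun φ => by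
    rw [RingHom.id_apply, map_smul, apply_mIntegral f.2 φ .univ, apply_mIntegral (c • f).2 φ .univ]
    exact sIntegral_smul _ c _ _

lemma apply_integral (f : VectorL1 m) (x : X →L[ℝ] ℝ) :
    x (integral m f) = sIntegral (dualApply m x) f Set.univ :=
  apply_mIntegral f.2 x .univ

/-- Multiplication by the indicator function of a measurable set, as an operator on `L¹(m)`. -/
def indicator {A : Set Ω} (hA : MeasurableSet A) : VectorL1 m →L[ℝ] VectorL1 m :=
  LinearMap.mkContinuous
    { toFun := fun f => ⟨A.indicator f, f.2.indicator hA⟩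
      map_add' := fun _ _ => Subtype.ext (Set.indicator_add _ _ _)
      map_smul' := fun c _ => Subtype.ext (Set.indicator_const_smul _ c _) }
    1 fun f => (f.2.mNorm_le_mNorm fun _ => norm_indicator_le_norm_self f _).trans_eq
      (one_mul _).symm

lemma indicator_add_indicator_compl {A : Set Ω} (hA : MeasurableSet A) (f : VectorL1 m) :
    indicator hA f + indicator hA.compl f = f :=
  Subtype.ext (Set.indicator_self_add_compl A _)

/-- The constant function `1` in `L¹(m)`. -/
def one (m : VectorMeasure Ω X) : VectorL1 m := ⟨1, mIntegrable_one m⟩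

/-- The absolute value of a function in `L¹(m)`. -/
def abs (f : VectorL1 m) : VectorL1 m := ⟨|f|, f.2.abs⟩

lemma isWeaklyNull_of_weaklyNullSeq {f : ℕ → VectorL1 m}
    (hf : WeaklyNullSeq (MIntegrable m) (mNorm m) fun n => f n) : IsWeaklyNull f := fun φ => by
  classical
  let T : (Ω → ℝ) → ℝ := fun g => if hg : MIntegrable m g then φ (⟨g, hg⟩ : VectorL1 m) else 0
  have hT : ∀ g : VectorL1 m, T g = φ g := fun g => dif_pos g.2
  have hbdd : IsBddLinFunctional (MIntegrable m) (mNorm m) T := by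
    refine ⟨fun g h hg hh => ?_, fun c g hg => ?_, ‖φ‖, fun g hg => ?_⟩
    · exact (hT (⟨g, hg⟩ + ⟨h, hh⟩)).trans <| (map_add φ _ _).trans <|
        congrArg₂ _ (hT ⟨g, hg⟩).symm (hT ⟨h, hh⟩).symm
    · exact (hT (c • ⟨g, hg⟩)).trans <| (map_smul φ _ _).trans <|
        congrArg (c * ·) (hT ⟨g, hg⟩).symm
    · exact (congrArg _ (hT ⟨g, hg⟩)).trans_le (φ.le_opNorm _)
  exact (hf T hbdd).congr fun n => hT (f n)

variable {η : Measure Ω} {a : ℕ → VectorL1 m}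

lemma unifACNorm_range_cesaroMean
    (ha : UnifACNorm η (mNorm m) (Set.range fun n => ⇑(a n))) :
    UnifACNorm η (mNorm m) (Set.range fun n => ⇑(cesaroMean a n)) := fun ε hε => by
  obtain ⟨δ, hδ, hsmall⟩ := ha ε hε
  refine ⟨δ, hδ, fun A hA hηA => Set.forall_mem_range.mpr fun n => ?_⟩
  calc ‖indicator hA (cesaroMean a n)‖ = ‖cesaroMean (fun k => indicator hA (a k)) n‖ := by
        rw [map_cesaroMean]
    _ ≤ ε := norm_cesaroMean_le hε.le (fun k => hsmall A hA hηA _ ⟨k, rfl⟩) n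

lemma norm_le_norm_indicator_add (f : VectorL1 m) {ρ : ℝ} (hρ : 0 ≤ ρ) :
    ‖f‖ ≤ mNorm m ({ω | ρ ≤ ‖f ω‖}.indicator f) + ‖one m‖ * ρ := by
  have hlarge : MeasurableSet {ω | ρ ≤ ‖f ω‖} := measurableSet_le measurable_const f.2.1.norm
  have hsmall : ‖indicator hlarge.compl f‖ ≤ ‖ρ • one m‖ := norm_le_norm fun ω => by
    change |Set.indicator _ _ _| ≤ |ρ * 1|
    rw [mul_one, abs_of_nonneg hρ, Set.indicator_apply]
    split_ifs with hω
    · exact (lt_of_not_ge (show ¬ρ ≤ ‖f ω‖ from hω)).le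
    · simpa using hρ
  calc ‖f‖ = ‖indicator hlarge f + indicator hlarge.compl f‖ := by
        rw [indicator_add_indicator_compl]
    _ ≤ ‖indicator hlarge f‖ + ‖indicator hlarge.compl f‖ := norm_add_le _ _
    _ ≤ ‖indicator hlarge f‖ + ‖ρ • one m‖ := by gcongr
    _ = _ := by rw [norm_smul, Real.norm_of_nonneg hρ, mul_comm]; rfl

lemma tendsto_zero_of_unifACNorm_of_tendstoInMeasure
    (hac : UnifACNorm η (mNorm m) (Set.range fun n => ⇑(a n)))
    (hmeas : TendstoInMeasure η (fun n => ⇑(a n)) atTop 0) : Tendsto a atTop (𝓝 0) := by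
  refine Metric.tendsto_nhds.mpr fun ε hε => ?_
  obtain ⟨δ, hδ, hsmall⟩ := hac (ε / 2) (half_pos hε)
  obtain ⟨ρ, hρ, hρone⟩ : ∃ ρ > 0, ‖one m‖ * ρ < ε / 2 := exists_pos_mul_lt (half_pos hε) _
  have hlevel := tendstoInMeasure_iff_norm.mp hmeas ρ hρ
  filter_upwards [hlevel.eventually_lt_const (ENNReal.ofReal_pos.mpr hδ)] with n hn
  simp only [Pi.zero_apply, sub_zero] at hn
  rw [dist_zero_right]
  have htail := hsmall _ (measurableSet_le measurable_const (a n).2.1.norm) hn _ ⟨n, rfl⟩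
  linarith [norm_le_norm_indicator_add (a n) hρ.le]

end VectorL1

end VectorL1

section Positivity

namespace BFS

lemma norm_le_norm (B : BFS S μ X) {x y : X} (h : ∀ᵐ s ∂μ, |B.J y s| ≤ |B.J x s|) :
    ‖y‖ ≤ ‖x‖ := by
  obtain ⟨z, hz, hzx⟩ := B.ideal x (B.J y) (B.aemeasurable y) h
  have hzy : z - y = 0 := B.eq_zero _ <| by
    filter_upwards [hz] with s hs
    simp [hs]
  rwa [← sub_eq_zero.mp hzy]

-- The negative part of a limit `x` of positive elements `b` is dominated by `|x - b|`, so its norm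
-- is `0`.
lemma isClosed_setOf_nonneg (B : BFS S μ X) : IsClosed {x : X | ∀ᵐ s ∂μ, 0 ≤ B.J x s} := by
  refine isClosed_of_closure_subset fun x hx => ?_
  obtain ⟨y, hyneg, -⟩ := B.ideal x (fun s => max (-B.J x s) 0)
    ((B.aemeasurable x).neg.max aemeasurable_const)
    (ae_of_all _ fun s => abs_max_le_max_abs_abs.trans (by simp))
  have hle : ∀ b ∈ {x : X | ∀ᵐ s ∂μ, 0 ≤ B.J x s}, ‖y‖ ≤ ‖x - b‖ := fun b hb =>
    B.norm_le_norm <| by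
      filter_upwards [hyneg, (hb : ∀ᵐ s ∂μ, 0 ≤ B.J b s)] with s hys hbs
      rw [hys, map_sub, Pi.sub_apply, abs_of_nonneg (le_max_right _ _)]
      exact max_le (by linarith [neg_abs_le (B.J x s - B.J b s)]) (abs_nonneg _)
  have hy : y = 0 := norm_eq_zero.mp <| (norm_nonneg y).antisymm' <|
    le_of_forall_pos_lt_add fun ε hε => by
      obtain ⟨b, hb, hxb⟩ := Metric.mem_closure_iff.mp hx ε hε
      rw [zero_add]
      exact (hle b hb).trans_lt (dist_eq_norm x b ▸ hxb)
  rw [hy, map_zero] at hyneg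
  change ∀ᵐ s ∂μ, 0 ≤ B.J x s
  filter_upwards [hyneg] with s hs
  exact neg_nonpos.mp ((le_max_left _ _).trans_eq hs.symm)

/-- The closed cone `X⁺` of almost everywhere nonnegative elements of a B.f.s. -/
def positiveCone (B : BFS S μ X) : ProperCone ℝ X where
  carrier := {x | ∀ᵐ s ∂μ, 0 ≤ B.J x s}
  add_mem' {x y} hx hy := by
    change ∀ᵐ s ∂μ, 0 ≤ B.J (x + y) s
    filter_upwards [(hx : ∀ᵐ s ∂μ, 0 ≤ B.J x s), (hy : ∀ᵐ s ∂μ, 0 ≤ B.J y s)] with s hxs hys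
    rw [map_add]
    exact add_nonneg hxs hys
  zero_mem' := by
    change ∀ᵐ s ∂μ, 0 ≤ B.J 0 s
    simp
  smul_mem' c x hx := by
    change ∀ᵐ s ∂μ, 0 ≤ B.J ((c : ℝ) • x) s
    filter_upwards [(hx : ∀ᵐ s ∂μ, 0 ≤ B.J x s)] with s hxs
    rw [map_smul]
    exact mul_nonneg c.2 hxs
  isClosed' := B.isClosed_setOf_nonneg

lemma mem_positiveCone {B : BFS S μ X} {x : X} :
    x ∈ B.positiveCone ↔ ∀ᵐ s ∂μ, 0 ≤ B.J x s := Iff.rfl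

lemma norm_sub_le_norm_add {B : BFS S μ X} {x y : X} (hx : x ∈ B.positiveCone)
    (hy : y ∈ B.positiveCone) : ‖x - y‖ ≤ ‖x + y‖ := B.norm_le_norm <| by
  filter_upwards [mem_positiveCone.mp hx, mem_positiveCone.mp hy] with s hxs hys
  rw [map_sub, map_add, Pi.sub_apply, Pi.add_apply, abs_of_nonneg (add_nonneg hxs hys), abs_le]
  constructor <;> linarith

end BFS

variable {m : VectorMeasure Ω X} {B : BFS S μ X}

lemma VectorL1.integral_mem_positiveCone (hpos : ∀ A, MeasurableSet A → m A ∈ B.positiveCone)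
    {f : VectorL1 m} (hf : 0 ≤ ⇑f) : integral m f ∈ B.positiveCone := by
  by_contra hmem
  obtain ⟨φ, hφ, hφf⟩ := B.positiveCone.hyperplane_separation_point hmem
  rw [apply_integral] at hφf
  exact hφf.not_ge (sIntegral_nonneg (fun A hA => hφ _ (hpos A hA)) hf _)

-- On a Hahn decomposition `P`, `Pᶜ` of `x*m` one has `∫ f d|x*m| = x*(a - b)` with `a = ∫_P f dm`
-- and `b = ∫_{Pᶜ} f dm` positive, and `|a - b| ≤ a + b = ∫ f dm`.
theorem VectorL1.norm_le_norm_integral (hpos : ∀ A, MeasurableSet A → m A ∈ B.positiveCone)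
    {f : VectorL1 m} (hf : 0 ≤ ⇑f) : ‖f‖ ≤ ‖integral m f‖ := mNorm_le fun x hx => by
  obtain ⟨P, hP, hsplit⟩ := exists_integral_totalVariation_eq (f.2.2.1 x)
  let a : X := integral m (indicator hP f)
  let b : X := integral m (indicator hP.compl f)
  have ha : a ∈ B.positiveCone :=
    integral_mem_positiveCone hpos (Set.indicator_nonneg fun ω _ => hf ω)
  have hb : b ∈ B.positiveCone :=
    integral_mem_positiveCone hpos (Set.indicator_nonneg fun ω _ => hf ω)
  have happly : ∀ {A} (hA : MeasurableSet A),
      x (integral m (indicator hA f)) = sIntegral (dualApply m x) f A := fun {A} hA => by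
    rw [apply_integral]
    exact (sIntegral_indicator _ f _ hA).trans (by rw [Set.univ_inter])
  calc ∫ ω, |f ω| ∂(dualApply m x).totalVariation
      = ∫ ω, f ω ∂(dualApply m x).totalVariation := by simp only [abs_of_nonneg (hf _)]
    _ = x (a - b) := by rw [hsplit, map_sub, happly hP, happly hP.compl]
    _ ≤ ‖x (a - b)‖ := le_abs_self _
    _ ≤ 1 * ‖a - b‖ := x.le_of_opNorm_le hx _
    _ ≤ ‖a + b‖ := (one_mul _).trans_le (BFS.norm_sub_le_norm_add ha hb)
    _ = ‖integral m f‖ := by rw [← map_add, indicator_add_indicator_compl]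

end Positivity

section DisjointPart

lemma tendsto_measure_biUnion_Ici_zero_of_pairwise_aedisjoint {α : Type*} [MeasurableSpace α]
    {η : Measure α} [IsFiniteMeasure η] {s : ℕ → Set α} (hs : ∀ n, NullMeasurableSet (s n) η)
    (hdisj : Pairwise (Function.onFun (AEDisjoint η) s)) :
    Tendsto (fun N => η (⋃ n ≥ N, s n)) atTop (𝓝 0) := by
  obtain ⟨t, htmeas, htnull, ht⟩ := exists_null_pairwise_disjoint_sdiff hdisj
  refine (tendsto_measure_biUnion_Ici_zero_of_pairwise_disjoint
    (fun n => (hs n).diff (htmeas n).nullMeasurableSet) ht).congr fun N => measure_congr ?_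
  exact Filter.EventuallyEq.countable_iUnion fun n => Filter.EventuallyEq.countable_iUnion fun _ =>
    sdiff_null_ae_eq_self (htnull n)

variable {m : VectorMeasure Ω X} {η : Measure Ω}

lemma aedisjoint_support_iff {u v : Ω → ℝ} :
    AEDisjoint η u.support v.support ↔ (fun ω => u ω * v ω) =ᵐ[η] 0 := by
  rw [AEDisjoint, ← Function.support_mul]
  exact Measure.measure_support_eq_zero_iff η

lemma ae_abs_eq_indicator_sub_indicator {h : ℕ → Ω → ℝ}
    (hdisj : ∀ i j, i ≠ j → (fun ω => h i ω * h j ω) =ᵐ[η] 0) {N n : ℕ} (hn : N ≤ n) :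
    ∀ᵐ ω ∂η, |h n ω| = (⋃ k ≥ N, {ω | 0 < h k ω}).indicator (h n) ω
      - (⋃ k ≥ N, {ω | h k ω < 0}).indicator (h n) ω := by
  have hall : ∀ᵐ ω ∂η, ∀ k, k ≠ n → h n ω * h k ω = 0 :=
    ae_all_iff.mpr fun k => eventually_imp_distrib_left.mpr fun hk => hdisj n k hk.symm
  filter_upwards [hall] with ω hω
  have huniq : ∀ k, h n ω ≠ 0 → h k ω ≠ 0 → k = n := fun k hnω hkω =>
    by_contra fun hk => mul_ne_zero hnω hkω (hω k hk)
  rcases lt_trichotomy (h n ω) 0 with hneg | hzero | hpos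
  · rw [Set.indicator_of_notMem, Set.indicator_of_mem, zero_sub, abs_of_neg hneg]
    · exact Set.mem_iUnion₂_of_mem hn hneg
    · rw [Set.mem_iUnion₂]
      rintro ⟨k, -, hk⟩
      exact hneg.not_gt (huniq k hneg.ne (ne_of_gt hk) ▸ hk)
  · rw [Set.indicator_apply_eq_zero.mpr fun _ => hzero,
      Set.indicator_apply_eq_zero.mpr fun _ => hzero, hzero, abs_zero, sub_zero]
  · rw [Set.indicator_of_mem, Set.indicator_of_notMem, sub_zero, abs_of_pos hpos]
    · rw [Set.mem_iUnion₂]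
      rintro ⟨k, -, hk⟩
      exact hpos.not_gt (huniq k hpos.ne' (ne_of_lt hk) ▸ hk)
    · exact Set.mem_iUnion₂_of_mem hn hpos

namespace VectorL1

/-- The functional `f ↦ ∫ f d|x*m|` on `L¹(m)`. -/
def variationIntegral (m : VectorMeasure Ω X) (x : X →L[ℝ] ℝ) : StrongDual ℝ (VectorL1 m) :=
  L1.integralCLM.comp (toL1 m x)

lemma variationIntegral_apply (x : X →L[ℝ] ℝ) (f : VectorL1 m) :
    variationIntegral m x f = ∫ ω, f ω ∂(dualApply m x).totalVariation :=
  (L1.integral_eq _).symm.trans <| (L1.integral_eq_integral _).trans <|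
    integral_congr_ae (coeFn_toL1 x f)

lemma abs_variationIntegral_le (x : X →L[ℝ] ℝ) (f : VectorL1 m) :
    |variationIntegral m x f| ≤ ‖x‖ * ‖f‖ := by
  rw [variationIntegral_apply]
  exact (abs_integral_le_integral_abs).trans (f.2.integral_abs_le_norm_mul_mNorm x)

variable {x : X →L[ℝ] ℝ} {g h : ℕ → VectorL1 m} [IsFiniteMeasure η]

lemma exists_dual_eq_norm_toL1 (hac : (dualApply m x).totalVariation ≪ η)
    (hg : UnifACNorm η (mNorm m) (Set.range fun n => ⇑(g n)))
    (hdisj : ∀ i j, i ≠ j → (fun ω => h i ω * h j ω) =ᵐ[η] 0) {ε : ℝ} (hε : 0 < ε) :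
    ∃ φ : StrongDual ℝ (VectorL1 m),
      (∀ᶠ n in atTop, φ (h n) = ‖toL1 m x (h n)‖) ∧ ∀ n, |φ (g n)| ≤ ‖x‖ * (2 * ε) := by
  obtain ⟨δ, hδ, hsmall⟩ := hg ε hε
  have htails : Tendsto (fun N => η (⋃ n ≥ N, (h n : Ω → ℝ).support)) atTop (𝓝 0) :=
    tendsto_measure_biUnion_Ici_zero_of_pairwise_aedisjoint
      (fun n => (measurableSet_support (h n).2.1).nullMeasurableSet)
      fun i j hij => aedisjoint_support_iff.mpr (hdisj i j hij)
  obtain ⟨N, hN⟩ := (htails.eventually_lt_const (ENNReal.ofReal_pos.mpr hδ)).exists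
  let P : Set Ω := ⋃ k ≥ N, {ω | 0 < h k ω}
  let Q : Set Ω := ⋃ k ≥ N, {ω | h k ω < 0}
  have hP : MeasurableSet P := .iUnion fun k => .iUnion fun _ =>
    measurableSet_lt measurable_const (h k).2.1
  have hQ : MeasurableSet Q := .iUnion fun k => .iUnion fun _ =>
    measurableSet_lt (h k).2.1 measurable_const
  have hPδ : η P < ENNReal.ofReal δ := (measure_mono <| Set.iUnion₂_mono fun k _ ω hω =>
    Function.mem_support.mpr (ne_of_gt hω)).trans_lt hN
  have hQδ : η Q < ENNReal.ofReal δ := (measure_mono <| Set.iUnion₂_mono fun k _ ω hω =>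
    Function.mem_support.mpr (ne_of_lt hω)).trans_lt hN
  refine ⟨(variationIntegral m x).comp (indicator (m := m) hP - indicator hQ), ?_, fun n => ?_⟩
  · filter_upwards [eventually_ge_atTop N] with n hn
    rw [norm_toL1, ContinuousLinearMap.comp_apply, variationIntegral_apply]
    refine integral_congr_ae ?_
    filter_upwards [hac.ae_le (ae_abs_eq_indicator_sub_indicator hdisj hn)] with ω hω
    exact hω.symm
  · calc |variationIntegral m x (indicator hP (g n) - indicator hQ (g n))|
        ≤ ‖x‖ * ‖indicator hP (g n) - indicator hQ (g n)‖ := abs_variationIntegral_le _ _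
      _ ≤ ‖x‖ * (2 * ε) := by
        gcongr
        rw [two_mul]
        exact norm_sub_le_of_le (hsmall P hP hPδ _ ⟨n, rfl⟩) (hsmall Q hQ hQδ _ ⟨n, rfl⟩)

theorem tendsto_toL1_zero_of_disjoint (hac : (dualApply m x).totalVariation ≪ η)
    (hgh : IsWeaklyNull (g + h)) (hg : UnifACNorm η (mNorm m) (Set.range fun n => ⇑(g n)))
    (hdisj : ∀ i j, i ≠ j → (fun ω => h i ω * h j ω) =ᵐ[η] 0) :
    Tendsto (fun n => toL1 m x (h n)) atTop (𝓝 0) := by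
  refine Metric.tendsto_nhds.mpr fun ε hε => ?_
  obtain ⟨ρ, hρ, hρε⟩ : ∃ ρ > 0, ‖x‖ * 2 * ρ < ε / 2 := exists_pos_mul_lt (half_pos hε) _
  obtain ⟨φ, hφh, hφg⟩ := exists_dual_eq_norm_toL1 hac hg hdisj hρ
  filter_upwards [hφh, Metric.tendsto_nhds.mp (hgh φ) (ε / 2) (half_pos hε)] with n hn hsum
  rw [dist_zero_right, Pi.add_apply, map_add, hn] at hsum
  rw [dist_zero_right]
  linarith [hφg n, neg_abs_le (φ (g n)), le_abs_self (φ (g n) + ‖toL1 m x (h n)‖),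
    Real.norm_eq_abs (φ (g n) + ‖toL1 m x (h n)‖)]

end VectorL1

end DisjointPart

section WeakBanachSaks

variable {m : VectorMeasure Ω X}

namespace VectorL1

lemma norm_toL1_le (x : X →L[ℝ] ℝ) (f : VectorL1 m) : ‖toL1 m x f‖ ≤ ‖x‖ * ‖f‖ :=
  (norm_toL1 x f).trans_le (f.2.integral_abs_le_norm_mul_mNorm x)

lemma indicator_toL1 (x : X →L[ℝ] ℝ) {A : Set Ω} (hA : MeasurableSet A) (f : VectorL1 m) :
    A.indicator (toL1 m x f) =ᵐ[(dualApply m x).totalVariation] toL1 m x (indicator hA f) :=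
  ((coeFn_toL1 x f).indicator (s := A)).trans (coeFn_toL1 x (indicator hA f)).symm

variable {x : X →L[ℝ] ℝ} {g h : ℕ → VectorL1 m}

lemma unifIntegrable_toL1
    (hg : UnifACNorm (dualApply m x).totalVariation (mNorm m) (Set.range fun n => ⇑(g n))) :
    UnifIntegrable (fun n => toL1 m x (g n)) 1 (dualApply m x).totalVariation := fun ε hε => by
  obtain ⟨ρ, hρ, hρε⟩ := exists_pos_mul_lt hε ‖x‖
  obtain ⟨δ, hδ, hsmall⟩ := hg ρ hρ
  refine ⟨δ / 2, half_pos hδ, fun n A hA hAδ => ?_⟩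
  have hlt := hAδ.trans_lt ((ENNReal.ofReal_lt_ofReal_iff hδ).mpr (half_lt_self hδ))
  rw [eLpNorm_congr_ae (indicator_toL1 x hA (g n)), ← Lp.enorm_def, ← ofReal_norm]
  refine ENNReal.ofReal_le_ofReal ?_
  calc ‖toL1 m x (indicator hA (g n))‖ ≤ ‖x‖ * ‖indicator hA (g n)‖ := norm_toL1_le x _
    _ ≤ ‖x‖ * ρ := by
        gcongr
        exact hsmall A hA hlt _ ⟨n, rfl⟩
    _ ≤ ε := hρε.le

lemma uniformIntegrable_toL1
    (hg : UnifACNorm (dualApply m x).totalVariation (mNorm m) (Set.range fun n => ⇑(g n)))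
    (hbdd : ∃ C, ∀ n, ‖toL1 m x (g n)‖ ≤ C) :
    UniformIntegrable (fun n => toL1 m x (g n)) 1 (dualApply m x).totalVariation := by
  obtain ⟨C, hC⟩ := hbdd
  refine ⟨fun n => Lp.aestronglyMeasurable _, unifIntegrable_toL1 hg, C.toNNReal, fun n => ?_⟩
  rw [← Lp.enorm_def, ← ofReal_norm]
  exact ENNReal.ofReal_le_ofReal (hC n)

lemma tendsto_zero_of_unifACNorm_of_tendsto_toL1
    (hg : UnifACNorm (dualApply m x).totalVariation (mNorm m) (Set.range fun n => ⇑(g n)))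
    (hlim : Tendsto (fun n => toL1 m x (g n)) atTop (𝓝 0)) : Tendsto g atTop (𝓝 0) :=
  tendsto_zero_of_unifACNorm_of_tendstoInMeasure hg <|
    (tendstoInMeasure_of_tendsto_Lp hlim).congr (fun n => coeFn_toL1 x (g n)) (Lp.coeFn_zero ℝ 1 _)

theorem exists_strictMono_hereditarilyCesaro_of_unifACNorm
    (hweak : IsWeaklyNull fun n => toL1 m x (g n))
    (hg : UnifACNorm (dualApply m x).totalVariation (mNorm m) (Set.range fun n => ⇑(g n))) :
    ∃ σ : ℕ → ℕ, StrictMono σ ∧ HereditarilyCesaro (g ∘ σ) 0 := by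
  obtain ⟨σ, hσ, hces⟩ := exists_strictMono_hereditarilyCesaro_of_uniformIntegrable hweak
    (uniformIntegrable_toL1 hg hweak.exists_norm_le)
  refine ⟨σ, hσ, fun τ hτ => tendsto_zero_of_unifACNorm_of_tendsto_toL1
    (unifACNorm_range_cesaroMean fun ε hε => ?_) ((hces τ hτ).congr fun n => ?_)⟩
  · obtain ⟨δ, hδ, hsmall⟩ := hg ε hε
    exact ⟨δ, hδ, fun A hA hAδ => Set.forall_mem_range.mpr fun n => hsmall A hA hAδ _ ⟨_, rfl⟩⟩
  · exact (map_cesaroMean (toL1 m x) _ n).symm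

lemma isWeaklyNull_integral_abs
    (hh : ∀ x : X →L[ℝ] ℝ, Tendsto (fun n => toL1 m x (h n)) atTop (𝓝 0)) :
    IsWeaklyNull fun n => integral m (abs (h n)) := fun x => by
  refine squeeze_zero_norm (fun n => ?_) (tendsto_zero_iff_norm_tendsto_zero.mp (hh x))
  calc ‖x (integral m (abs (h n)))‖
      = |sIntegral (dualApply m x) |⇑(h n)| Set.univ| := congrArg _ (apply_integral _ x)
    _ ≤ ∫ ω, |(|h n ω|)| ∂(dualApply m x).totalVariation :=
        abs_sIntegral_le ((abs (h n)).2.2.1 x) Set.univ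
    _ = ‖toL1 m x (h n)‖ := by simp only [abs_abs, norm_toL1]

variable {B : BFS S μ X}

lemma norm_cesaroMean_le_norm_cesaroMean_integral_abs
    (hpos : ∀ A, MeasurableSet A → m A ∈ B.positiveCone) (h : ℕ → VectorL1 m) (n : ℕ) :
    ‖cesaroMean h n‖ ≤ ‖cesaroMean (fun k => integral m (abs (h k))) n‖ := by
  have hle : |⇑(cesaroMean h n)| ≤ ⇑(cesaroMean (fun k => abs (h k)) n) := by
    rw [coe_cesaroMean, coe_cesaroMean]
    exact abs_cesaroMean_le _ n
  have hnonneg : 0 ≤ ⇑(cesaroMean (fun k => abs (h k)) n) := (abs_nonneg _).trans hle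
  calc ‖cesaroMean h n‖ ≤ ‖cesaroMean (fun k => abs (h k)) n‖ :=
        norm_le_norm (hle.trans (le_abs_self _))
    _ ≤ ‖integral m (cesaroMean (fun k => abs (h k)) n)‖ := norm_le_norm_integral hpos hnonneg
    _ = _ := by rw [map_cesaroMean]

theorem exists_strictMono_tendsto_cesaroMean_zero_of_weakBanachSaks (hWBS : WeakBanachSaks X)
    (hpos : ∀ A, MeasurableSet A → m A ∈ B.positiveCone)
    (hh : ∀ x : X →L[ℝ] ℝ, Tendsto (fun n => toL1 m x (h n)) atTop (𝓝 0)) :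
    ∃ τ : ℕ → ℕ, StrictMono τ ∧ Tendsto (cesaroMean (h ∘ τ)) atTop (𝓝 0) := by
  obtain ⟨τ, hτ, hlim⟩ := hWBS _ (isWeaklyNull_integral_abs hh)
  exact ⟨τ, hτ, squeeze_zero_norm
    (norm_cesaroMean_le_norm_cesaroMean_integral_abs hpos (h ∘ τ)) hlim⟩

theorem exists_strictMono_tendsto_cesaroMean_zero_of_splitting (hWBS : WeakBanachSaks X)
    (hpos : ∀ A, MeasurableSet A → m A ∈ B.positiveCone)
    (hRyb : ∀ y : X →L[ℝ] ℝ, (dualApply m y).totalVariation ≪ (dualApply m x).totalVariation)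
    (hgh : IsWeaklyNull (g + h))
    (hg : UnifACNorm (dualApply m x).totalVariation (mNorm m) (Set.range fun n => ⇑(g n)))
    (hdisj : ∀ i j, i ≠ j → (fun ω => h i ω * h j ω) =ᵐ[(dualApply m x).totalVariation] 0) :
    ∃ σ : ℕ → ℕ, StrictMono σ ∧ Tendsto (cesaroMean ((g + h) ∘ σ)) atTop (𝓝 0) := by
  have hnullh (y : X →L[ℝ] ℝ) : Tendsto (fun n => toL1 m y (h n)) atTop (𝓝 0) :=
    tendsto_toL1_zero_of_disjoint (hRyb y) hgh hg hdisj
  have hnullg : IsWeaklyNull fun n => toL1 m x (g n) := by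
    simpa [Pi.sub_def] using (hgh.map (toL1 m x)).sub_of_tendsto_zero (hnullh x)
  obtain ⟨ρ, hρ, hgρ⟩ := exists_strictMono_hereditarilyCesaro_of_unifACNorm hnullg hg
  obtain ⟨τ, hτ, hhτ⟩ := exists_strictMono_tendsto_cesaroMean_zero_of_weakBanachSaks hWBS hpos
    fun y => (hnullh y).comp hρ.tendsto_atTop
  refine ⟨ρ ∘ τ, hρ.comp hτ, ?_⟩
  rw [← add_zero (0 : VectorL1 m)]
  exact ((hgρ τ hτ).add hhτ).congr fun n => (cesaroMean_add _ _ n).symm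

end VectorL1

lemma totalVariation_dualApply_absolutelyContinuous {η : Measure Ω}
    (hη : ∀ A, MeasurableSet A → η A = 0 → semivar m A = 0) (x : X →L[ℝ] ℝ) :
    (dualApply m x).totalVariation ≪ η :=
  .mk fun A hA hηA => totalVariation_dualApply_eq_zero (hη A hA hηA) x

end WeakBanachSaks

theorem statement2_general
    {S : Type*} [MeasurableSpace S] {μ : Measure S}
    {X : Type*} [NormedAddCommGroup X] [NormedSpace ℝ X]
    (B : BFS S μ X)
    {Ω : Type*} [MeasurableSpace Ω] (m : VectorMeasure Ω X)
    (hWBS : WeakBanachSaks X)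
    (hpos : ∀ A : Set Ω, MeasurableSet A → ∀ᵐ s ∂μ, 0 ≤ B.J (m A) s)
    (x₀ : X →L[ℝ] ℝ)
    (hRyb : ∀ A : Set Ω, MeasurableSet A →
      ((dualApply m x₀).totalVariation A = 0 ↔ semivar m A = 0))
    (hSSP : HasSSP ((dualApply m x₀).totalVariation) (MIntegrable m) (mNorm m)) :
    HasWBS (MIntegrable m) (mNorm m) := fun f hf hnull => by
  let F : ℕ → VectorL1 m := fun n => ⟨f n, hf n⟩
  have hF : IsWeaklyNull F := VectorL1.isWeaklyNull_of_weaklyNullSeq hnull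
  obtain ⟨σ, hσ, g, h, hg, hh, hsplit, -, hac, hdisj⟩ := hSSP f hf hF.exists_norm_le
  let G : ℕ → VectorL1 m := fun n => ⟨g n, hg n⟩
  let H : ℕ → VectorL1 m := fun n => ⟨h n, hh n⟩
  have hFσ : F ∘ σ = G + H := funext fun n => Subtype.ext (hsplit n)
  have hGH : IsWeaklyNull (G + H) := hFσ ▸ hF.comp hσ
  obtain ⟨τ, hτ, hlim⟩ := VectorL1.exists_strictMono_tendsto_cesaroMean_zero_of_splitting hWBS hpos
    (totalVariation_dualApply_absolutelyContinuous fun A hA => (hRyb A hA).mp) hGH hac hdisj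
  rw [← hFσ] at hlim
  exact ⟨σ ∘ τ, hσ.comp hτ, (tendsto_zero_iff_norm_tendsto_zero.mp hlim).congr fun n =>
    congrArg (mNorm m) (VectorL1.coe_cesaroMean _ n)⟩

/-- if `X` has the weak Banach-Saks property, `m` is separable and positive, and
`L¹(m)` has the subsequence splitting property, then `L¹(m)` has the weak Banach-Saks
property. -/
theorem statement2
    {S : Type*} [MeasurableSpace S] {μ : Measure S} [IsFiniteMeasure μ]
    {X : Type*} [NormedAddCommGroup X] [NormedSpace ℝ X] [CompleteSpace X]
    (B : BFS S μ X)
    {Ω : Type*} [MeasurableSpace Ω] (m : VectorMeasure Ω X)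
    (hWBS : WeakBanachSaks X)
    (hsep : SeparableVM m)
    (hpos : ∀ A : Set Ω, MeasurableSet A → ∀ᵐ s ∂μ, 0 ≤ B.J (m A) s)
    (x₀ : X →L[ℝ] ℝ)
    (hRyb : ∀ A : Set Ω, MeasurableSet A →
      ((dualApply m x₀).totalVariation A = 0 ↔ semivar m A = 0))
    (hSSP : HasSSP ((dualApply m x₀).totalVariation) (MIntegrable m) (mNorm m)) :
    HasWBS (MIntegrable m) (mNorm m) :=
  statement2_general B m hWBS hpos x₀ hRyb hSSP

end Paper
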